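/- Let S be a uniquely ergodic continuous map of a compact metric space Y, and let ν be the unique S-invariant Borel probability measure on Y. Assume that the measure-theoretic dynamical system (Y,ν,S) has quasi-discrete spectrum. Then for every multiplicative function u : ℕ → ℂ with |u(n)| ≤ 1 for all n, every continuous f : Y → ℂ with ∫_Y f dν = 0, and every y ∈ Y, one has (1/N) Σ_{n ≤ N} f(Sⁿy) u(n) → 0 as N → ∞. -/

import Mathlib

open MeasureTheory Filter

/-- `c` is an eigenvalue of `T` w.r.t. `μ`: there is a nonzero `f ∈ L²(μ)` with
`f ∘ T = c · f` a.e. -/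
def IsEigenvalue {X : Type*} [MeasurableSpace X] (T : X → X) (μ : Measure X) (c : ℂ) : Prop :=
  ∃ f : X → ℂ, MemLp f 2 μ ∧ ¬ (f =ᵐ[μ] 0) ∧
    (fun x => f (T x)) =ᵐ[μ] (fun x => c * f x)

/-- The quasi-eigenfunction groups `E_k(T)`: `E₀(T)` consists of the constant functions of
modulus 1 whose value is an eigenvalue of `T`, and
`E_k(T) = {f measurable, |f| = 1 a.e., (f ∘ T)/f ∈ E_{k-1}(T)}`. -/
def quasiEigenfunctions {X : Type*} [MeasurableSpace X] (T : X → X) (μ : Measure X) :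
    ℕ → Set (X → ℂ)
  | 0 => {f | ∃ c : ℂ, ‖c‖ = 1 ∧ IsEigenvalue T μ c ∧ f = fun _ => c}
  | (k+1) => {f | Measurable f ∧ (∀ᵐ x ∂μ, ‖f x‖ = 1) ∧
      (fun x => f (T x) / f x) ∈ quasiEigenfunctions T μ k}

/-- `T` is totally ergodic: every nonzero power of `T` is ergodic. -/
def TotallyErgodic {X : Type*} [MeasurableSpace X] (T : X → X) (μ : Measure X) : Prop :=
  ∀ m : ℕ, m ≠ 0 → Ergodic (T^[m]) μ

/-- `(X,μ,T)` has quasi-discrete spectrum: it is totally ergodic and the linear span of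
the quasi-eigenfunctions `⋃_k E_k(T)` is dense in `L²(X,μ)`. -/
def QuasiDiscreteSpectrum {X : Type*} [MeasurableSpace X] (T : X → X) (μ : Measure X) : Prop :=
  TotallyErgodic T μ ∧
  Dense ((Submodule.span ℂ
      {g : Lp ℂ 2 μ | ∃ k : ℕ, ∃ f ∈ quasiEigenfunctions T μ k, ⇑g =ᵐ[μ] f} :
        Submodule ℂ (Lp ℂ 2 μ)) : Set (Lp ℂ 2 μ))

/-- `S` is uniquely ergodic with unique invariant Borel probability measure `ν`. -/
def UniquelyErgodicWith {Y : Type*} [MeasurableSpace Y] (S : Y → Y) (ν : Measure Y) : Prop :=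
  IsProbabilityMeasure ν ∧ ν.map S = ν ∧
  ∀ μ' : Measure Y, IsProbabilityMeasure μ' → μ'.map S = μ' → μ' = ν

/-!
By Kátai's criterion (a consequence of the Turán–Kubilius inequality), `a(n) = h(Sⁿ y)` is
orthogonal to `u` as soon as the correlations of `a(pn)` and `a(qn)` are small for distinct primes
`p` and `q`. By unique ergodicity of the powers of `S`, limits of these correlations are integrals
`∫ h ⊗ conj h dκ` for joinings `κ` of `S^p` and `S^q`.

Let `F` be a nonconstant quasi-eigenfunction. By total ergodicity it has, after lowering its order
`k` if necessary, a leading constant `c` of infinite order. Under `S^p × S^q` the function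
`F ⊗ conj F` is then a quasi-eigenfunction whose leading constant `c ^ (p ^ k - q ^ k)` is again of
infinite order. Such a function has mean zero for every invariant measure: for `k = 1` it is
multiplied by `c ^ (p - q) ≠ 1`, and for larger `k` it is, by induction, orthogonal to its own
iterates, hence by Bessel's inequality to the constants. So the correlations are small when `h` is a
continuous function close to `F` in `L²`. Limits of linear combinations of quasi-eigenfunctions
are reached because the `L²` norm of `h` asymptotically controls its weighted averages.
-/

open scoped Topology ComplexConjugate

section MeanZero

variable {𝕜 E Z : Type*} [RCLike 𝕜]

lemma inner_eq_zero_of_inner_pow_eq_zero [NormedAddCommGroup E] [InnerProductSpace 𝕜 E]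
    (U : E →ₗᵢ[𝕜] E) {v w : E} (hv : ∀ n ≠ 0, inner 𝕜 v ((U ^ n) v) = 0) (hw : U w = w) :
    inner 𝕜 v w = 0 := by
  obtain rfl | hv0 := eq_or_ne v 0
  · exact inner_zero_left w
  have hlt : ∀ m n : ℕ, m < n → inner 𝕜 ((U ^ m) v) ((U ^ n) v) = 0 := fun m n hmn => by
    obtain ⟨d, rfl⟩ := Nat.exists_eq_add_of_le hmn.le
    rw [pow_add, LinearIsometry.coe_mul, Function.comp_apply, (U ^ m).inner_map_map,
      hv d (by omega)]
  have hsmul : Orthonormal 𝕜 fun n : ℕ => ((‖v‖⁻¹ : ℝ) : 𝕜) • (U ^ n) v := by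
    refine ⟨fun n => by simp [norm_smul, hv0], fun m n hmn => ?_⟩
    simp only [inner_smul_left, inner_smul_right, hmn.lt_or_gt.elim (hlt m n)
      fun h => inner_eq_zero_symm.1 (hlt n m h), mul_zero]
  have hconst : ∀ n : ℕ, inner 𝕜 (((‖v‖⁻¹ : ℝ) : 𝕜) • (U ^ n) v) w = (‖v‖⁻¹ : ℝ) * inner 𝕜 v w :=
    fun n => by
      have hwn : (U ^ n) w = w := by rw [LinearIsometry.coe_pow, Function.iterate_fixed hw]
      conv_lhs => rw [← hwn]
      rw [inner_smul_left, (U ^ n).inner_map_map, RCLike.conj_ofReal]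
  have hsummable := hsmul.inner_products_summable w
  simp only [hconst, summable_const_iff] at hsummable
  simpa [hv0] using hsummable

variable [MeasurableSpace Z] {R : Z → Z} {κ : Measure Z}

lemma integral_comp_of_measurePreserving {W : Type*} [MeasurableSpace W] {ρ : Measure W}
    [NormedAddCommGroup E] [NormedSpace ℝ E] {π : W → Z} (hπ : MeasurePreserving π ρ κ) {F : Z → E}
    (hF : AEStronglyMeasurable F κ) : ∫ w, F (π w) ∂ρ = ∫ z, F z ∂κ := by
  rw [← hπ.map_eq] at hF ⊢
  exact (integral_map hπ.aemeasurable hF).symm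

lemma integral_eq_zero_of_orthogonal_iterates [IsFiniteMeasure κ] (hR : MeasurePreserving R κ κ)
    {F : Z → 𝕜} (hF : MemLp F 2 κ)
    (horth : ∀ n ≠ 0, ∫ z, F (R^[n] z) * conj (F z) ∂κ = 0) : ∫ z, F z ∂κ = 0 := by
  have hone : MemLp (fun _ : Z => (1 : 𝕜)) 2 κ := memLp_const 1
  have hinner : inner 𝕜 (hF.toLp F) (hone.toLp _) = 0 := by
    refine inner_eq_zero_of_inner_pow_eq_zero (Lp.compMeasurePreservingₗᵢ 𝕜 R hR)
      (fun n hn => ?_) rfl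
    have hiter : (Lp.compMeasurePreservingₗᵢ 𝕜 R hR ^ n) (hF.toLp F) =
        (hF.comp_measurePreserving (hR.iterate n)).toLp _ := by
      rw [LinearIsometry.coe_pow]
      exact congrFun (Lp.compMeasurePreserving_iterate hR n) _
    rw [hiter, L2.inner_def, ← horth n hn]
    refine integral_congr_ae ?_
    filter_upwards [hF.coeFn_toLp, (hF.comp_measurePreserving (hR.iterate n)).coeFn_toLp]
      with z hz hz'
    rw [hz, hz', RCLike.inner_apply, Function.comp_apply]
  rw [← inner_conj_symm, map_eq_zero, L2.inner_def] at hinner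
  rw [← hinner]
  refine integral_congr_ae ?_
  filter_upwards [hF.coeFn_toLp, hone.coeFn_toLp] with z hz hz'
  rw [hz, hz', RCLike.inner_apply, map_one, mul_one]

end MeanZero

section QuasiEigenfunctions

/-- `F` is almost everywhere a quasi-eigenfunction of order `k` of `R`: it has modulus one and its
`k`-th multiplicative derivative (the `k`-th iterate of `f ↦ (f ∘ R) / f`) is a.e. equal to the
leading constant `c`. Unlike in `quasiEigenfunctions`, the constant need not be an eigenvalue and
functions are taken modulo null sets, so that the notion passes to extensions of `R`. -/
def IsQuasiEigenfunction {Z : Type*} [MeasurableSpace Z] (R : Z → Z) (κ : Measure Z) :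
    ℕ → Circle → (Z → ℂ) → Prop
  | 0, c, F => F =ᵐ[κ] fun _ => (c : ℂ)
  | k + 1, c, F => AEStronglyMeasurable F κ ∧ (∀ᵐ z ∂κ, ‖F z‖ = 1) ∧
      ∃ G, IsQuasiEigenfunction R κ k c G ∧ ∀ᵐ z ∂κ, F (R z) = G z * F z

namespace IsQuasiEigenfunction

variable {Z : Type*} [MeasurableSpace Z] {R : Z → Z} {κ : Measure Z} {k : ℕ} {c : Circle}
  {F : Z → ℂ}

lemma of_mem_quasiEigenfunctions (h : F ∈ quasiEigenfunctions R κ k) :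
    ∃ c, IsQuasiEigenfunction R κ k c F := by
  induction k generalizing F with
  | zero =>
    obtain ⟨c, hc, -, rfl⟩ := h
    exact ⟨⟨c, mem_sphere_zero_iff_norm.2 hc⟩, .rfl⟩
  | succ k ih =>
    obtain ⟨hmeas, hnorm, hG⟩ := h
    obtain ⟨c, hc⟩ := ih hG
    refine ⟨c, hmeas.aestronglyMeasurable, hnorm, _, hc, hnorm.mono fun x hx => ?_⟩
    rw [div_mul_cancel₀ _ (norm_ne_zero_iff.1 (hx ▸ one_ne_zero))]

lemma aestronglyMeasurable (h : IsQuasiEigenfunction R κ k c F) : AEStronglyMeasurable F κ := by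
  cases k with
  | zero => exact aestronglyMeasurable_const.congr (EventuallyEq.symm h)
  | succ k => exact h.1

lemma norm_eq_one (h : IsQuasiEigenfunction R κ k c F) : ∀ᵐ z ∂κ, ‖F z‖ = 1 := by
  cases k with
  | zero => exact Eventually.mono h fun z hz => hz ▸ c.norm_coe
  | succ k => exact h.2.1

lemma memLp [IsFiniteMeasure κ] (h : IsQuasiEigenfunction R κ k c F) (p : ENNReal) :
    MemLp F p κ :=
  .of_bound h.aestronglyMeasurable 1 (h.norm_eq_one.mono fun _ hz => hz.le)

lemma one (k : ℕ) : IsQuasiEigenfunction R κ k 1 fun _ => 1 := by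
  induction k with
  | zero => exact .rfl
  | succ k ih => exact ⟨aestronglyMeasurable_const, by simp, _, ih, by simp⟩

lemma mul {c' : Circle} {F' : Z → ℂ} (h : IsQuasiEigenfunction R κ k c F)
    (h' : IsQuasiEigenfunction R κ k c' F') :
    IsQuasiEigenfunction R κ k (c * c') fun z => F z * F' z := by
  induction k generalizing c c' F F' with
  | zero => exact EventuallyEq.mul h h'
  | succ k ih =>
    obtain ⟨hmeas, hnorm, G, hG, hFG⟩ := h
    obtain ⟨hmeas', hnorm', G', hG', hFG'⟩ := h'
    refine ⟨hmeas.mul hmeas', ?_, _, ih hG hG', ?_⟩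
    · filter_upwards [hnorm, hnorm'] with z hz hz'
      rw [norm_mul, hz, hz', one_mul]
    · filter_upwards [hFG, hFG'] with z hz hz'
      rw [hz, hz', mul_mul_mul_comm]

lemma complexConj (h : IsQuasiEigenfunction R κ k c F) :
    IsQuasiEigenfunction R κ k c⁻¹ fun z => conj (F z) := by
  induction k generalizing c F with
  | zero => exact Eventually.mono h fun z hz => by simp only [hz, Circle.coe_inv_eq_conj]
  | succ k ih =>
    obtain ⟨hmeas, hnorm, G, hG, hFG⟩ := h
    exact ⟨Complex.continuous_conj.comp_aestronglyMeasurable hmeas,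
      hnorm.mono fun z hz => by rwa [RCLike.norm_conj], _, ih hG,
      hFG.mono fun z hz => by simp only [hz, map_mul]⟩

lemma comp_semiconj {W : Type*} [MeasurableSpace W] {T : W → W} {ρ : Measure W} {π : W → Z}
    (h : IsQuasiEigenfunction R κ k c F) (hπ : MeasurePreserving π ρ κ)
    (hsemi : Function.Semiconj π T R) : IsQuasiEigenfunction T ρ k c fun w => F (π w) := by
  have hae := fun {P : Z → Prop} => hπ.quasiMeasurePreserving.ae (p := P)
  induction k generalizing c F with
  | zero => exact hae h
  | succ k ih =>
    obtain ⟨hmeas, hnorm, G, hG, hFG⟩ := h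
    exact ⟨hmeas.comp_measurePreserving hπ, hae hnorm, _, ih hG,
      (hae hFG).mono fun w hw => by simpa only [hsemi w] using hw⟩

lemma exists_iterate (hR : MeasurePreserving R κ κ) (h : IsQuasiEigenfunction R κ (k + 1) c F)
    (n : ℕ) : ∃ G, IsQuasiEigenfunction R κ k (c ^ n) G ∧ ∀ᵐ z ∂κ, F (R^[n] z) = G z * F z := by
  obtain ⟨-, -, G, hG, hFG⟩ := h
  induction n with
  | zero => exact ⟨_, pow_zero c ▸ one k, by simp⟩
  | succ n ih =>
    obtain ⟨H, hH, hFH⟩ := ih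
    have hGn := hG.comp_semiconj (hR.iterate n) (Function.Commute.iterate_self R n).semiconj
    refine ⟨_, pow_succ' c n ▸ hGn.mul hH, ?_⟩
    filter_upwards [hFH, (hR.iterate n).quasiMeasurePreserving.ae hFG] with z hz hz'
    rw [Function.iterate_succ_apply', hz', hz, mul_assoc]

lemma iterate (hR : MeasurePreserving R κ κ) (h : IsQuasiEigenfunction R κ k c F) (p : ℕ) :
    IsQuasiEigenfunction R^[p] κ k (c ^ p ^ k) F := by
  induction k generalizing c F with
  | zero => rwa [pow_zero, pow_one]
  | succ k ih =>
    obtain ⟨G, hG, hFG⟩ := h.exists_iterate hR p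
    exact ⟨h.1, h.2.1, G, pow_succ' p k ▸ pow_mul c p (p ^ k) ▸ ih hG, hFG⟩

lemma integral_eq_zero [IsFiniteMeasure κ] (hR : MeasurePreserving R κ κ)
    (h : IsQuasiEigenfunction R κ (k + 1) c F) (hc : ¬ IsOfFinOrder c) : ∫ z, F z ∂κ = 0 := by
  induction k generalizing c F with
  | zero =>
    have hfixed : (c : ℂ) * ∫ z, F z ∂κ = ∫ z, F z ∂κ := by
      obtain ⟨hmeas, -, G, hG, hFG⟩ := h
      rw [← integral_const_mul, ← integral_comp_of_measurePreserving hR hmeas]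
      refine integral_congr_ae ?_
      filter_upwards [hG, hFG] with z hz hz'
      rw [hz', hz]
    refine (mul_left_eq_self₀.1 hfixed).resolve_left fun hc1 => hc ?_
    rw [Circle.coe_eq_one.1 hc1]
    exact .one
  | succ k ih =>
    refine integral_eq_zero_of_orthogonal_iterates hR (h.memLp 2) fun n hn => ?_
    obtain ⟨G, hG, hFG⟩ := h.exists_iterate hR n
    rw [← ih hG fun hfin => hc (hfin.of_pow hn)]
    refine integral_congr_ae ?_
    filter_upwards [hFG, h.norm_eq_one] with z hz hz'
    rw [hz, mul_assoc, RCLike.mul_conj, hz']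
    simp

lemma ae_eq_const_of_isOfFinOrder (hR : TotallyErgodic R κ)
    (h : IsQuasiEigenfunction R κ 1 c F) (hc : IsOfFinOrder c) : ∃ b : ℂ, F =ᵐ[κ] fun _ => b := by
  obtain ⟨n, hn, hcn⟩ := isOfFinOrder_iff_pow_eq_one.1 hc
  have hpres : MeasurePreserving R κ κ := (hR 1 one_ne_zero).toMeasurePreserving
  obtain ⟨G, hG, hFG⟩ := h.exists_iterate hpres n
  refine (hR n hn.ne').ae_eq_const_of_ae_eq_comp_ae h.aestronglyMeasurable ?_
  filter_upwards [hG, hFG] with z hz hz'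
  rw [Function.comp_apply, hz', hz, hcn, Circle.coe_one, one_mul]

lemma exists_ae_eq_const_or_not_isOfFinOrder [NeZero κ] (hR : TotallyErgodic R κ)
    (h : IsQuasiEigenfunction R κ k c F) :
    (∃ b : Circle, F =ᵐ[κ] fun _ => (b : ℂ)) ∨
      ∃ j b, IsQuasiEigenfunction R κ (j + 1) b F ∧ ¬ IsOfFinOrder b := by
  induction k generalizing c F with
  | zero => exact .inl ⟨c, h⟩
  | succ k ih =>
    obtain ⟨hmeas, hnorm, G, hG, hFG⟩ := h
    obtain ⟨b, hb⟩ | ⟨j, b, hb, hb'⟩ := ih hG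
    · have hF : IsQuasiEigenfunction R κ 1 b F := ⟨hmeas, hnorm, G, hb, hFG⟩
      by_cases hfin : IsOfFinOrder b
      · obtain ⟨a, ha⟩ := hF.ae_eq_const_of_isOfFinOrder hR hfin
        obtain ⟨z, hz, hz'⟩ := (ha.and hnorm).exists
        exact .inl ⟨⟨a, mem_sphere_zero_iff_norm.2 ((congrArg norm hz).symm.trans hz')⟩, ha⟩
      · exact .inr ⟨0, b, hF, hfin⟩
    · exact .inr ⟨j + 1, b, ⟨hmeas, hnorm, G, hb, hFG⟩, hb'⟩

end IsQuasiEigenfunction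

end QuasiEigenfunctions

section InvariantMeasures

variable {Z : Type*} [MeasurableSpace Z] {T : Z → Z} {ρ : Measure Z} {N : ℕ}

/-- The average of the first `N` push-forwards of the measure `ρ` under the iterates of `T`; it is
the empirical measure of an orbit segment when `ρ` is a Dirac mass. -/
noncomputable def orbitAverage (T : Z → Z) (ρ : Measure Z) (N : ℕ) : Measure Z :=
  (N : ENNReal)⁻¹ • ∑ n ∈ Finset.range N, ρ.map T^[n]

lemma isProbabilityMeasure_orbitAverage [IsProbabilityMeasure ρ] (hT : Measurable T) (hN : N ≠ 0) :
    IsProbabilityMeasure (orbitAverage T ρ N) := by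
  have huniv : ∀ n, ρ.map T^[n] .univ = 1 := fun n =>
    (Measure.isProbabilityMeasure_map (hT.iterate n).aemeasurable).measure_univ
  constructor
  simp only [orbitAverage, Measure.smul_apply, Measure.coe_finsetSum, Finset.sum_apply, huniv,
    Finset.sum_const, Finset.card_range, nsmul_eq_mul, mul_one, smul_eq_mul]
  exact ENNReal.inv_mul_cancel (Nat.cast_ne_zero.2 hN) (ENNReal.natCast_ne_top N)

lemma map_orbitAverage (hT : Measurable T) (hρ : ρ.map T^[N] = ρ) :
    (orbitAverage T ρ N).map T = orbitAverage T ρ N := by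
  cases N with
  | zero => simp [orbitAverage]
  | succ N =>
    have hmap : ∀ n, (ρ.map T^[n]).map T = ρ.map T^[n + 1] := fun n => by
      rw [Measure.map_map hT (hT.iterate n), Function.iterate_succ']
    rw [orbitAverage, Measure.map_smul, ← Measure.mapₗ_apply_of_measurable hT, map_sum]
    simp only [Measure.mapₗ_apply_of_measurable hT, hmap]
    rw [Finset.sum_range_succ, hρ, Finset.sum_range_succ' (fun n => ρ.map T^[n]),
      Function.iterate_zero, Measure.map_id]

lemma absolutelyContinuous_orbitAverage (hN : N ≠ 0) : ρ ≪ orbitAverage T ρ N := by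
  refine Measure.AbsolutelyContinuous.mk fun s _ hs => ?_
  simp only [orbitAverage, Measure.smul_apply, Measure.coe_finsetSum, Finset.sum_apply,
    smul_eq_mul, mul_eq_zero, ENNReal.inv_eq_zero, ENNReal.natCast_ne_top, false_or,
    Finset.sum_eq_zero_iff, Finset.mem_range] at hs
  simpa only [Function.iterate_zero, Measure.map_id] using hs 0 (Nat.pos_of_ne_zero hN)

lemma integral_orbitAverage_dirac {E : Type*} [NormedAddCommGroup E] [NormedSpace ℝ E]
    [CompleteSpace E] (hT : Measurable T) {g : Z → E} (hg : StronglyMeasurable g) (z : Z) (N : ℕ) :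
    ∫ x, g x ∂(orbitAverage T (.dirac z) N) = birkhoffAverage ℝ T g N z := by
  simp only [orbitAverage, fun n => Measure.map_dirac' (hT.iterate n) z]
  rw [integral_smul_measure,
    integral_finsetSum_measure fun n _ => integrable_dirac' hg enorm_lt_top]
  simp only [integral_dirac' _ _ hg, ENNReal.toReal_inv, ENNReal.toReal_natCast,
    birkhoffAverage, birkhoffSum]

variable [TopologicalSpace Z] [BorelSpace Z]

lemma map_eq_of_tendsto_birkhoffAverage [HasOuterApproxClosed Z] [IsFiniteMeasure ρ]
    (hT : Continuous T) {l : Filter ℕ} [l.NeBot] (hl : l ≤ atTop) (z : Z)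
    (hlim : ∀ g : BoundedContinuousFunction Z ℝ,
      Tendsto (birkhoffAverage ℝ T g · z) l (𝓝 (∫ x, g x ∂ρ))) : ρ.map T = ρ := by
  refine ext_of_forall_integral_eq_of_IsFiniteMeasure fun g => ?_
  rw [integral_map hT.aemeasurable g.continuous.aestronglyMeasurable]
  have hshift : Tendsto (fun N => birkhoffAverage ℝ T g N (T z)) l (𝓝 (∫ x, g (T x) ∂ρ)) := by
    refine (hlim (g.compContinuous ⟨T, hT⟩)).congr fun N => ?_
    simp only [birkhoffAverage, birkhoffSum, fun n => (Function.Commute.iterate_self T n).eq z,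
      BoundedContinuousFunction.compContinuous_apply, ContinuousMap.coe_mk]
  have hdiff := (tendsto_birkhoffAverage_apply_sub_birkhoffAverage' ℝ
    g.isBounded_range T z).mono_left hl
  exact sub_eq_zero.1 (tendsto_nhds_unique (hshift.sub (hlim g)) hdiff)

/-- Krylov–Bogoliubov theorem, along an ultrafilter. -/
lemma exists_measurePreserving_tendsto_birkhoffAverage [CompactSpace Z] [T2Space Z]
    [HasOuterApproxClosed Z] (hT : Continuous T) (z : Z) {U : Ultrafilter ℕ}
    (hU : (U : Filter ℕ) ≤ atTop) :
    ∃ κ : Measure Z, IsProbabilityMeasure κ ∧ MeasurePreserving T κ κ ∧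
      ∀ (𝕜 : Type) [RCLike 𝕜] (g : C(Z, 𝕜)),
        Tendsto (birkhoffAverage ℝ T g · z) U (𝓝 (∫ x, g x ∂κ)) := by
  have hex : ∀ N, ∃ μ : ProbabilityMeasure Z,
      N ≠ 0 → (μ : Measure Z) = orbitAverage T (.dirac z) N := fun N => by
    obtain rfl | hN := eq_or_ne N 0
    · exact ⟨⟨.dirac z, inferInstance⟩, fun h => (h rfl).elim⟩
    · exact ⟨⟨_, isProbabilityMeasure_orbitAverage hT.measurable hN⟩, fun _ => rfl⟩
  choose μ hμ using hex
  let κ := (U.map μ).lim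
  have hκ : Tendsto μ U (𝓝 κ) := (U.map μ).le_nhds_lim
  have hlim (𝕜 : Type) [RCLike 𝕜] (g : BoundedContinuousFunction Z 𝕜) :
      Tendsto (birkhoffAverage ℝ T g · z) U (𝓝 (∫ x, g x ∂κ)) := by
    refine ((ProbabilityMeasure.tendsto_iff_forall_integral_rclike_tendsto 𝕜).1 hκ g).congr' ?_
    filter_upwards [hU (eventually_ne_atTop 0)] with N hN
    rw [hμ N hN, integral_orbitAverage_dirac hT.measurable g.continuous.stronglyMeasurable]
  exact ⟨κ, inferInstance, ⟨hT.measurable, map_eq_of_tendsto_birkhoffAverage hT hU z (hlim ℝ)⟩,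
    fun 𝕜 _ g => hlim 𝕜 (.mkOfCompact g)⟩

end InvariantMeasures

section OrbitSums

variable {Z E : Type*} [NormedAddCommGroup E] [NormedSpace ℝ E] {T : Z → Z}

lemma birkhoffAverage_apply_map (g : Z → E) (N : ℕ) (z : Z) :
    birkhoffAverage ℝ T g N (T z) = (N : ℝ)⁻¹ • ∑ n ∈ Finset.Icc 1 N, g (T^[n] z) := by
  simp only [birkhoffAverage, birkhoffSum, ← Function.iterate_succ_apply, Nat.succ_eq_add_one]
  rw [Finset.range_eq_Ico, Finset.sum_Ico_add' (fun n => g (T^[n] z)), zero_add,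
    Finset.Ico_add_one_right_eq_Icc]

lemma eventually_norm_sum_le_of_tendsto_birkhoffAverage {l : Filter ℕ} {g : Z → E} {z : Z} {a : E}
    (hlim : Tendsto (birkhoffAverage ℝ T g · (T z)) l (𝓝 a)) {ε : ℝ} (hε : ‖a‖ < ε) :
    ∀ᶠ N : ℕ in l, ‖∑ n ∈ Finset.Icc 1 N, g (T^[n] z)‖ ≤ ε * N := by
  filter_upwards [hlim.norm.eventually_lt_const hε] with N hN
  obtain rfl | hN0 := eq_or_ne N 0
  · simp
  rw [birkhoffAverage_apply_map, norm_smul, norm_inv, Real.norm_natCast,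
    inv_mul_lt_iff₀ (by positivity)] at hN
  exact mul_comm ε N ▸ hN.le

end OrbitSums

section UniqueErgodicity

namespace UniquelyErgodicWith

variable {Y : Type*} [MeasurableSpace Y] {S : Y → Y} {ν : Measure Y}

lemma iterate (h : UniquelyErgodicWith S ν) (hS : Measurable S) {p : ℕ} (hp : p ≠ 0)
    (herg : Ergodic S^[p] ν) : UniquelyErgodicWith S^[p] ν := by
  have hν := h.1
  refine ⟨hν, herg.map_eq, fun ρ hρ hinv => ?_⟩
  have havg : orbitAverage S ρ p = ν :=
    h.2.2 _ (isProbabilityMeasure_orbitAverage hS hp) (map_orbitAverage hS hinv)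
  exact herg.eq_of_absolutelyContinuous ⟨hS.iterate p, hinv⟩
    (havg ▸ absolutelyContinuous_orbitAverage hp)

lemma measurePreserving_of_semiconj (h : UniquelyErgodicWith S ν) (hS : Measurable S) {W : Type*}
    [MeasurableSpace W] {R : W → W} {κ : Measure W} [IsProbabilityMeasure κ]
    (hR : MeasurePreserving R κ κ) {π : W → Y} (hπ : Measurable π)
    (hsemi : Function.Semiconj π R S) : MeasurePreserving π κ ν := by
  have hinv := MeasurePreserving.of_semiconj (hπ.measurePreserving κ) hR hsemi hS
  exact ⟨hπ, h.2.2 _ (Measure.isProbabilityMeasure_map hπ.aemeasurable) hinv.map_eq⟩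

lemma tendsto_birkhoffAverage [TopologicalSpace Y] [BorelSpace Y] [CompactSpace Y] [T2Space Y]
    [HasOuterApproxClosed Y] (h : UniquelyErgodicWith S ν) (hS : Continuous S) {𝕜 : Type} [RCLike 𝕜]
    (f : C(Y, 𝕜)) (y : Y) : Tendsto (birkhoffAverage ℝ S f · y) atTop (𝓝 (∫ x, f x ∂ν)) := by
  rw [tendsto_iff_ultrafilter]
  intro U hU
  obtain ⟨κ, hκ, hinv, hlim⟩ := exists_measurePreserving_tendsto_birkhoffAverage hS y hU
  exact h.2.2 κ hκ hinv.map_eq ▸ hlim 𝕜 f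

end UniquelyErgodicWith

end UniqueErgodicity

section Joinings

variable {W Z 𝕜 : Type*} [RCLike 𝕜] [MeasurableSpace W] [MeasurableSpace Z] {κ : Measure W}
  {μ : Measure Z} {π₁ π₂ : W → Z}

lemma norm_mul_conj_sub_mul_conj_le {a b a' b' : 𝕜} (hb : ‖b‖ ≤ 1) (ha' : ‖a'‖ ≤ 1) :
    ‖a * conj b - a' * conj b'‖ ≤ ‖a - a'‖ + ‖b - b'‖ :=
  calc ‖a * conj b - a' * conj b'‖ = ‖(a - a') * conj b + a' * conj (b - b')‖ := by
        rw [map_sub]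
        ring_nf
    _ ≤ ‖a - a'‖ * ‖b‖ + ‖a'‖ * ‖b - b'‖ :=
        (norm_add_le _ _).trans_eq (by simp only [norm_mul, RCLike.norm_conj])
    _ ≤ ‖a - a'‖ + ‖b - b'‖ :=
        add_le_add (mul_le_of_le_one_right (norm_nonneg _) hb)
          (mul_le_of_le_one_left (norm_nonneg _) ha')

lemma norm_integral_mul_conj_sub_le [IsFiniteMeasure μ] (hπ₁ : MeasurePreserving π₁ κ μ)
    (hπ₂ : MeasurePreserving π₂ κ μ) {F G : Z → 𝕜} (hF : AEStronglyMeasurable F μ)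
    (hG : AEStronglyMeasurable G μ) (hF1 : ∀ᵐ z ∂μ, ‖F z‖ ≤ 1) (hG1 : ∀ᵐ z ∂μ, ‖G z‖ ≤ 1) :
    ‖∫ w, F (π₁ w) * conj (F (π₂ w)) ∂κ - ∫ w, G (π₁ w) * conj (G (π₂ w)) ∂κ‖ ≤
      2 * ∫ z, ‖F z - G z‖ ∂μ := by
  have hint : ∀ {H : Z → 𝕜}, AEStronglyMeasurable H μ → (∀ᵐ z ∂μ, ‖H z‖ ≤ 1) →
      Integrable (fun w => H (π₁ w) * conj (H (π₂ w))) κ := fun {H} hH hH1 => by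
    have hcomp := hH.comp_measurePreserving hπ₂
    refine ((hπ₁.integrable_comp_of_integrable (.of_bound hH 1 hH1)).mul_bdd (c := 1)
      (RCLike.continuous_conj.comp_aestronglyMeasurable hcomp) ?_)
    filter_upwards [hπ₂.quasiMeasurePreserving.ae hH1] with w hw
    rwa [RCLike.norm_conj]
  have hdist : Integrable (fun z => ‖F z - G z‖) μ :=
    ((Integrable.of_bound hF 1 hF1).sub (.of_bound hG 1 hG1)).norm
  have h₁ := hπ₁.integrable_comp_of_integrable hdist
  have h₂ := hπ₂.integrable_comp_of_integrable hdist
  have hpointwise : ∀ᵐ w ∂κ, ‖F (π₁ w) * conj (F (π₂ w)) - G (π₁ w) * conj (G (π₂ w))‖ ≤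
      ‖F (π₁ w) - G (π₁ w)‖ + ‖F (π₂ w) - G (π₂ w)‖ := by
    filter_upwards [hπ₂.quasiMeasurePreserving.ae hF1, hπ₁.quasiMeasurePreserving.ae hG1]
      with w hFw hGw using norm_mul_conj_sub_mul_conj_le hFw hGw
  calc _ = ‖∫ w, (F (π₁ w) * conj (F (π₂ w)) - G (π₁ w) * conj (G (π₂ w))) ∂κ‖ := by
        rw [integral_sub (hint hF hF1) (hint hG hG1)]
    _ ≤ ∫ w, (‖F (π₁ w) - G (π₁ w)‖ + ‖F (π₂ w) - G (π₂ w)‖) ∂κ :=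
        norm_integral_le_of_norm_le (h₁.add h₂) hpointwise
    _ = ∫ w, ‖F (π₁ w) - G (π₁ w)‖ ∂κ + ∫ w, ‖F (π₂ w) - G (π₂ w)‖ ∂κ := integral_add h₁ h₂
    _ = 2 * ∫ z, ‖F z - G z‖ ∂μ := by
        rw [integral_comp_of_measurePreserving hπ₁ hdist.1,
          integral_comp_of_measurePreserving hπ₂ hdist.1, two_mul]

lemma not_isOfFinOrder_pow_mul_inv_pow {G : Type*} [CommGroup G] {c : G} (hc : ¬ IsOfFinOrder c)
    {a b : ℕ} (hab : a ≠ b) : ¬ IsOfFinOrder (c ^ a * (c ^ b)⁻¹) := fun hfin => by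
  obtain ⟨n, hn, hpow⟩ := isOfFinOrder_iff_pow_eq_one.1 hfin
  rw [mul_pow, inv_pow, mul_inv_eq_one, ← pow_mul, ← pow_mul] at hpow
  exact hab (Nat.eq_of_mul_eq_mul_right hn (injective_pow_iff_not_isOfFinOrder.2 hc hpow))

namespace IsQuasiEigenfunction

lemma integral_mul_conj_eq_zero [IsFiniteMeasure κ] {R : W → W} {T : Z → Z} {p q k : ℕ}
    {c : Circle} {F : Z → ℂ} (h : IsQuasiEigenfunction T μ (k + 1) c F) (hc : ¬ IsOfFinOrder c)
    (hT : MeasurePreserving T μ μ) (hR : MeasurePreserving R κ κ) (hπ₁ : MeasurePreserving π₁ κ μ)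
    (hπ₂ : MeasurePreserving π₂ κ μ) (hsemi₁ : Function.Semiconj π₁ R T^[p])
    (hsemi₂ : Function.Semiconj π₂ R T^[q]) (hpq : p ≠ q) :
    ∫ w, F (π₁ w) * conj (F (π₂ w)) ∂κ = 0 := by
  have h₁ := (h.iterate hT p).comp_semiconj hπ₁ hsemi₁
  have h₂ := (h.iterate hT q).comp_semiconj hπ₂ hsemi₂
  exact (h₁.mul h₂.complexConj).integral_eq_zero hR
    (not_isOfFinOrder_pow_mul_inv_pow hc ((Nat.pow_left_injective k.succ_ne_zero).ne hpq))

lemma eventually_norm_sum_mul_conj_le {Y : Type*} [MetricSpace Y] [CompactSpace Y]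
    [MeasurableSpace Y] [BorelSpace Y] {S : Y → Y} {ν : Measure Y} {k : ℕ} {c : Circle} {F : Y → ℂ}
    (hF : IsQuasiEigenfunction S ν (k + 1) c F) (hc : ¬ IsOfFinOrder c)
    (h : UniquelyErgodicWith S ν) (htot : TotallyErgodic S ν) (hS : Continuous S)
    {g : C(Y, ℂ)} (hg : ‖g‖ ≤ 1) {ε : ℝ} (hε : 2 * ∫ x, ‖F x - g x‖ ∂ν < ε) (y : Y) {p q : ℕ}
    (hp : p ≠ 0) (hq : q ≠ 0) (hpq : p ≠ q) :
    ∀ᶠ N : ℕ in atTop,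
      ‖∑ n ∈ Finset.Icc 1 N, g (S^[p * n] y) * conj (g (S^[q * n] y))‖ ≤ ε * N := by
  have hν := h.1
  have hinv : MeasurePreserving S ν ν := ⟨hS.measurable, h.2.1⟩
  have hg1 : ∀ x, ‖g x‖ ≤ 1 := fun x => (g.norm_coe_le_norm x).trans hg
  have hiter := fun {n : ℕ} (hn : n ≠ 0) => h.iterate hS.measurable hn (htot n hn)
  refine mem_iff_ultrafilter.2 fun U hU => ?_
  let R : Y × Y → Y × Y := Prod.map S^[p] S^[q]
  have hR : Continuous R := (hS.iterate p).prodMap (hS.iterate q)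
  obtain ⟨κ, hκ, hRκ, hlim⟩ := exists_measurePreserving_tendsto_birkhoffAverage hR (R (y, y)) hU
  have hfst : MeasurePreserving Prod.fst κ ν := (hiter hp).measurePreserving_of_semiconj
    (hS.measurable.iterate p) hRκ measurable_fst fun _ => rfl
  have hsnd : MeasurePreserving Prod.snd κ ν := (hiter hq).measurePreserving_of_semiconj
    (hS.measurable.iterate q) hRκ measurable_snd fun _ => rfl
  have hzero : ∫ z, F z.1 * conj (F z.2) ∂κ = 0 :=
    hF.integral_mul_conj_eq_zero hc hinv hRκ hfst hsnd (fun _ => rfl) (fun _ => rfl) hpq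
  have hclose := norm_integral_mul_conj_sub_le hfst hsnd hF.aestronglyMeasurable
    g.continuous.aestronglyMeasurable (hF.norm_eq_one.mono fun _ hx => hx.le) (.of_forall hg1)
  rw [hzero, zero_sub, norm_neg] at hclose
  let G : C(Y × Y, ℂ) := ⟨fun z => g z.1 * conj (g z.2), by fun_prop⟩
  filter_upwards [eventually_norm_sum_le_of_tendsto_birkhoffAverage (hlim ℂ G)
    (hclose.trans_lt hε)] with N hN
  simpa only [G, R, ContinuousMap.coe_mk, Prod.map_iterate, Prod.map_apply,
    ← Function.iterate_mul] using hN

end IsQuasiEigenfunction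

end Joinings

section ContinuousApproximation

lemma norm_sub_inv_max_smul_le {E : Type*} [NormedAddCommGroup E] [NormedSpace ℝ E] {v w : E}
    (hw : ‖w‖ ≤ 1) : ‖w - (max 1 ‖v‖)⁻¹ • v‖ ≤ 2 * ‖w - v‖ := by
  have hdist : ‖v - (max 1 ‖v‖)⁻¹ • v‖ ≤ ‖w - v‖ := by
    obtain hv | hv := le_total ‖v‖ 1
    · simp [max_eq_left hv]
    have hv0 : ‖v‖ ≠ 0 := (one_pos.trans_le hv).ne'
    calc ‖v - (max 1 ‖v‖)⁻¹ • v‖ = ‖(1 - ‖v‖⁻¹) • v‖ := by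
          rw [max_eq_right hv, sub_smul, one_smul]
      _ = ‖v‖ - 1 := by
          rw [norm_smul, Real.norm_of_nonneg (sub_nonneg.2 (inv_le_one_of_one_le₀ hv)), sub_mul,
            inv_mul_cancel₀ hv0, one_mul]
      _ ≤ ‖v‖ - ‖w‖ := sub_le_sub_left hw _
      _ ≤ ‖w - v‖ := norm_sub_rev w v ▸ norm_sub_norm_le v w
  linarith [norm_sub_le_norm_sub_add_norm_sub w v ((max 1 ‖v‖)⁻¹ • v)]

variable {Y : Type*} [TopologicalSpace Y] [CompactSpace Y] [MeasurableSpace Y] [BorelSpace Y]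
  {ν : Measure Y}

lemma exists_continuousMap_norm_le_one_norm_sub_toLp_le [NormalSpace Y]
    [SecondCountableTopology Y] [ν.WeaklyRegular] [IsFiniteMeasure ν] {𝕜 E : Type*} [RCLike 𝕜]
    [NormedAddCommGroup E] [NormedSpace ℝ E] [NormedSpace 𝕜 E] {p : ENNReal} [Fact (1 ≤ p)]
    (hp : p ≠ ⊤) (F : Lp E p ν) (hF : ∀ᵐ x ∂ν, ‖F x‖ ≤ 1) {ε : ℝ} (hε : 0 < ε) :
    ∃ g : C(Y, E), ‖g‖ ≤ 1 ∧ ‖F - ContinuousMap.toLp p ν 𝕜 g‖ ≤ ε := by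
  obtain ⟨h, hh⟩ := (ContinuousMap.toLp_denseRange E ν 𝕜 hp).exists_dist_lt F (half_pos hε)
  rw [dist_eq_norm] at hh
  have hpos : ∀ x, 0 < max 1 ‖h x‖ := fun x => lt_max_of_lt_left one_pos
  let g : C(Y, E) := ⟨fun x => (max 1 ‖h x‖)⁻¹ • h x,
    ((continuous_const.max h.continuous.norm).inv₀ fun x => (hpos x).ne').smul h.continuous⟩
  refine ⟨g, (ContinuousMap.norm_le g zero_le_one).2 fun x => ?_, ?_⟩
  · rw [ContinuousMap.coe_mk, norm_smul, norm_inv, Real.norm_of_nonneg (hpos x).le,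
      inv_mul_le_one₀ (hpos x)]
    exact le_max_right _ _
  · have hle : ‖F - ContinuousMap.toLp p ν 𝕜 g‖ ≤ 2 * ‖F - ContinuousMap.toLp p ν 𝕜 h‖ := by
      refine Lp.norm_le_mul_norm_of_ae_le_mul ?_
      filter_upwards [hF, Lp.coeFn_sub F (ContinuousMap.toLp p ν 𝕜 g),
        Lp.coeFn_sub F (ContinuousMap.toLp p ν 𝕜 h), ContinuousMap.coeFn_toLp (p := p) (𝕜 := 𝕜) ν g,
        ContinuousMap.coeFn_toLp (p := p) (𝕜 := 𝕜) ν h] with x hx hg hh hgx hhx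
      rw [hg, hh, Pi.sub_apply, Pi.sub_apply, hgx, hhx]
      exact norm_sub_inv_max_smul_le hx
    linarith

lemma integral_norm_le_norm_Lp {X E : Type*} [MeasurableSpace X] {μ : Measure X}
    [IsProbabilityMeasure μ] [NormedAddCommGroup E] {p : ENNReal} (hp : 1 ≤ p) (g : Lp E p μ) :
    ∫ x, ‖g x‖ ∂μ ≤ ‖g‖ := by
  rw [integral_norm_eq_lintegral_enorm (Lp.aestronglyMeasurable g),
    ← eLpNorm_one_eq_lintegral_enorm, Lp.norm_def]
  exact ENNReal.toReal_mono (Lp.eLpNorm_ne_top g)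
    (eLpNorm_le_eLpNorm_of_exponent_le hp (Lp.aestronglyMeasurable g))

end ContinuousApproximation

section AsymptoticKernel

variable {𝕜 V H E ι : Type*} [NormedField 𝕜] [AddCommGroup V] [Module 𝕜 V]
  [NormedAddCommGroup H] [NormedSpace 𝕜 H] [NormedAddCommGroup E] [NormedSpace 𝕜 E]
  {J : V →ₗ[𝕜] H} {A : ι → V →ₗ[𝕜] E} {l : Filter ι}

/-- The subspace of those `g : H` on which a family of operators `A i`, defined on a space `V`
mapped to `H` by `J`, tends to zero in a weak sense: `g` has to be approximable by vectors `J h`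
with `A i h` eventually small. It lives in `H`, to which the `A i` need not extend. -/
def asymptoticKernel (J : V →ₗ[𝕜] H) (A : ι → V →ₗ[𝕜] E) (l : Filter ι) : Submodule 𝕜 H where
  carrier := {g | ∀ δ > 0, ∃ h, ‖g - J h‖ ≤ δ ∧ ∀ᶠ i in l, ‖A i h‖ ≤ δ}
  zero_mem' δ hδ := ⟨0, by simpa using hδ.le, by simpa using .of_forall fun _ => hδ.le⟩
  add_mem' {g g'} hg hg' δ hδ := by
    obtain ⟨h, hgh, hA⟩ := hg (δ / 2) (half_pos hδ)
    obtain ⟨h', hgh', hA'⟩ := hg' (δ / 2) (half_pos hδ)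
    refine ⟨h + h', ?_, ?_⟩
    · rw [map_add, add_sub_add_comm]
      exact (norm_add_le_of_le hgh hgh').trans_eq (add_halves δ)
    · filter_upwards [hA, hA'] with i hi hi'
      rw [map_add]
      exact (norm_add_le_of_le hi hi').trans_eq (add_halves δ)
  smul_mem' c g hg δ hδ := by
    obtain ⟨ε, hε, hcε⟩ := exists_pos_mul_lt hδ ‖c‖
    obtain ⟨h, hgh, hA⟩ := hg ε hε
    refine ⟨c • h, ?_, hA.mono fun i hi => ?_⟩
    · rw [map_smul, ← smul_sub, norm_smul]
      exact (mul_le_mul_of_nonneg_left hgh (norm_nonneg c)).trans hcε.le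
    · rw [map_smul, norm_smul]
      exact (mul_le_mul_of_nonneg_left hi (norm_nonneg c)).trans hcε.le

lemma isClosed_asymptoticKernel : IsClosed (asymptoticKernel J A l : Set H) := by
  refine isClosed_of_closure_subset fun g hg δ hδ => ?_
  obtain ⟨g', hg', hdist⟩ := Metric.mem_closure_iff.1 hg (δ / 2) (half_pos hδ)
  obtain ⟨h, hgh, hA⟩ := hg' (δ / 2) (half_pos hδ)
  refine ⟨h, ?_, hA.mono fun i hi => hi.trans (half_le_self hδ.le)⟩
  rw [dist_eq_norm] at hdist
  linarith [norm_sub_le_norm_sub_add_norm_sub g g' (J h)]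

lemma tendsto_zero_of_mem_asymptoticKernel {C : ℝ} (hC : 0 ≤ C)
    (hA : ∀ h ε, C * ‖J h‖ < ε → ∀ᶠ i in l, ‖A i h‖ ≤ ε) {f : V}
    (hf : J f ∈ asymptoticKernel J A l) : Tendsto (A · f) l (𝓝 0) := by
  rw [Metric.nhds_basis_closedBall.tendsto_right_iff]
  intro ε hε
  obtain ⟨δ, hδ, hCδ⟩ := exists_pos_mul_lt (half_pos hε) C
  obtain ⟨h, hfh, hh⟩ := hf (min δ (ε / 2)) (lt_min hδ (half_pos hε))
  rw [← map_sub] at hfh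
  have hclose : C * ‖J (f - h)‖ < ε / 2 :=
    (mul_le_mul_of_nonneg_left (hfh.trans (min_le_left _ _)) hC).trans_lt hCδ
  filter_upwards [hh, hA _ _ hclose] with i hi hi'
  rw [mem_closedBall_zero_iff, ← sub_add_cancel f h, map_add]
  exact (norm_add_le_of_le hi' (hi.trans (min_le_right _ _))).trans_eq (add_halves ε)

end AsymptoticKernel

section Katai

open Finset

/-- The number `ω_P(n)` of elements of `P` dividing `n`. -/
def divisorCount (P : Finset ℕ) (n : ℕ) : ℕ := #{p ∈ P | p ∣ n}

/-- The sum of the reciprocals of the elements of `P`, which is the asymptotic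
mean of `divisorCount P` along the positive integers. -/
noncomputable def reciprocalSum (P : Finset ℕ) : ℝ := ∑ p ∈ P, (p : ℝ)⁻¹

lemma reciprocalSum_nonneg (P : Finset ℕ) : 0 ≤ reciprocalSum P :=
  sum_nonneg fun _ _ => by positivity

lemma exists_primes_le_reciprocalSum (M : ℝ) :
    ∃ P : Finset ℕ, (∀ p ∈ P, p.Prime) ∧ M ≤ reciprocalSum P := by
  by_contra! hbounded
  refine not_summable_one_div_on_primes (summable_of_sum_le (c := M)
    (Set.indicator_nonneg fun _ _ => by positivity) fun s => ?_)
  have hlt := hbounded {p ∈ s | p.Prime} fun p hp => (mem_filter.1 hp).2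
  simpa [reciprocalSum, sum_filter, Set.indicator_apply] using hlt.le

lemma sum_Icc_filter_dvd {M : Type*} [AddCommMonoid M] (p N : ℕ) (b : ℕ → M) :
    ∑ n ∈ Icc 1 N with p ∣ n, b n = ∑ m ∈ Icc 1 (N / p), b (p * m) := by
  obtain rfl | hp := p.eq_zero_or_pos
  · rw [Nat.div_zero, Icc_eq_empty_of_lt (b := 0) one_pos, sum_empty, sum_eq_zero]
    simp only [mem_filter, mem_Icc, zero_dvd_iff]
    omega
  symm
  refine sum_nbij (p * ·) (fun m hm => ?_) (fun m _ m' _ h => Nat.eq_of_mul_eq_mul_left hp h)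
    (fun n hn => ?_) fun _ _ => rfl
  · simp only [mem_Icc, Nat.le_div_iff_mul_le hp, mul_comm _ p, mem_filter,
      dvd_mul_right, and_true] at hm ⊢
    exact ⟨Nat.mul_pos hp hm.1, hm.2⟩
  · simp only [coe_filter, mem_Icc, Set.mem_ofPred_eq] at hn
    obtain ⟨⟨hpos, hle⟩, m, rfl⟩ := hn
    exact ⟨m, mem_coe.2 (mem_Icc.2 ⟨Nat.pos_of_mul_pos_left hpos,
      (Nat.le_div_iff_mul_le hp).2 (mul_comm p m ▸ hle)⟩), rfl⟩

lemma sum_divisorCount_mul {R : Type*} [Semiring R] (P : Finset ℕ) (N : ℕ) (b : ℕ → R) :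
    ∑ n ∈ Icc 1 N, (divisorCount P n : R) * b n = ∑ p ∈ P, ∑ m ∈ Icc 1 (N / p), b (p * m) := by
  simp_rw [divisorCount, natCast_card_filter, sum_mul, boole_mul]
  rw [sum_comm]
  simp_rw [← sum_filter, sum_Icc_filter_dvd]

lemma sum_divisorCount_eq (P : Finset ℕ) (N : ℕ) :
    ∑ n ∈ Icc 1 N, (divisorCount P n : ℝ) = ∑ p ∈ P, ((N / p : ℕ) : ℝ) := by
  simpa using sum_divisorCount_mul P N fun _ => (1 : ℝ)

lemma sum_divisorCount_le (P : Finset ℕ) (N : ℕ) :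
    ∑ n ∈ Icc 1 N, (divisorCount P n : ℝ) ≤ N * reciprocalSum P := by
  rw [sum_divisorCount_eq, reciprocalSum, mul_sum]
  exact sum_le_sum fun p _ => Nat.cast_div_le.trans_eq (div_eq_mul_inv _ _)

lemma le_sum_divisorCount (P : Finset ℕ) (N : ℕ) :
    N * reciprocalSum P - #P ≤ ∑ n ∈ Icc 1 N, (divisorCount P n : ℝ) := by
  rw [sum_divisorCount_eq, reciprocalSum, mul_sum, card_eq_sum_ones, Nat.cast_sum,
    ← sum_sub_distrib]
  refine sum_le_sum fun p _ => ?_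
  rw [Nat.cast_one, ← div_eq_mul_inv, ← Nat.floor_div_eq_div (K := ℝ)]
  exact (Nat.sub_one_lt_floor _).le

lemma divisorCount_prime_mul_le {P : Finset ℕ} (hP : ∀ p ∈ P, p.Prime) {p : ℕ} (hp : p.Prime)
    (m : ℕ) : divisorCount P (p * m) ≤ 1 + divisorCount P m := by
  rw [add_comm]
  refine (card_le_card fun q hq => ?_).trans (card_insert_le p {q ∈ P | q ∣ m})
  obtain ⟨hqP, hdvd⟩ := mem_filter.1 hq
  rw [mem_insert, mem_filter]
  exact ((hP q hqP).dvd_mul.1 hdvd).imp ((Nat.prime_dvd_prime_iff_eq (hP q hqP) hp).1 ·)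
    (⟨hqP, ·⟩)

lemma sum_divisorCount_sq_le {P : Finset ℕ} (hP : ∀ p ∈ P, p.Prime) (N : ℕ) :
    ∑ n ∈ Icc 1 N, (divisorCount P n : ℝ) ^ 2 ≤
      N * (reciprocalSum P + reciprocalSum P ^ 2) := by
  calc ∑ n ∈ Icc 1 N, (divisorCount P n : ℝ) ^ 2
      = ∑ p ∈ P, ∑ m ∈ Icc 1 (N / p), (divisorCount P (p * m) : ℝ) := by
        simp_rw [sq]
        exact sum_divisorCount_mul P N _
    _ ≤ ∑ p ∈ P, ∑ m ∈ Icc 1 (N / p), (1 + divisorCount P m : ℝ) :=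
        sum_le_sum fun p hp => sum_le_sum fun m _ => by
          exact_mod_cast divisorCount_prime_mul_le hP (hP p hp) m
    _ ≤ ∑ p ∈ P, N * (p : ℝ)⁻¹ * (1 + reciprocalSum P) := by
        refine sum_le_sum fun p _ => ?_
        have hdiv : ((N / p : ℕ) : ℝ) ≤ N * (p : ℝ)⁻¹ :=
          Nat.cast_div_le.trans_eq (div_eq_mul_inv _ _)
        have hL := reciprocalSum_nonneg P
        have hcount : ∑ m ∈ Icc 1 (N / p), (1 + divisorCount P m : ℝ) ≤
            (N / p : ℕ) * (1 + reciprocalSum P) := by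
          have := sum_divisorCount_le P (N / p)
          simp only [sum_add_distrib, sum_const, Nat.card_Icc, Nat.add_sub_cancel, nsmul_eq_mul]
          linarith
        exact hcount.trans (by gcongr)
    _ = N * (reciprocalSum P + reciprocalSum P ^ 2) := by
        rw [← sum_mul, ← mul_sum, ← reciprocalSum]
        ring

lemma turan_kubilius {P : Finset ℕ} (hP : ∀ p ∈ P, p.Prime) (N : ℕ) :
    ∑ n ∈ Icc 1 N, (divisorCount P n - reciprocalSum P) ^ 2 ≤
      reciprocalSum P * (N + 2 * #P) := by
  calc ∑ n ∈ Icc 1 N, (divisorCount P n - reciprocalSum P) ^ 2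
      = ∑ n ∈ Icc 1 N, (divisorCount P n : ℝ) ^ 2 -
          2 * reciprocalSum P * ∑ n ∈ Icc 1 N, (divisorCount P n : ℝ) +
          N * reciprocalSum P ^ 2 := by
        simp only [sub_sq, sum_add_distrib, sum_sub_distrib, mul_sum, sum_const, Nat.card_Icc,
          Nat.add_sub_cancel, nsmul_eq_mul, mul_right_comm _ _ (reciprocalSum P)]
    _ ≤ reciprocalSum P * (N + 2 * #P) := by
        have := mul_le_mul_of_nonneg_left (le_sum_divisorCount P N) (reciprocalSum_nonneg P)
        linarith [sum_divisorCount_sq_le hP N]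

lemma norm_sum_divisorCount_sub_mul_le {P : Finset ℕ} (hP : ∀ p ∈ P, p.Prime) {N : ℕ}
    (hN : 2 * #P ≤ N) {b : ℕ → ℂ} {C : ℝ} (hb : ∀ n, ‖b n‖ ≤ C) :
    ‖∑ n ∈ Icc 1 N, ((divisorCount P n : ℂ) - reciprocalSum P) * b n‖ ≤
      C * (√(2 * reciprocalSum P) * N) := by
  have hL := reciprocalSum_nonneg P
  have hN' : 2 * (#P : ℝ) ≤ N := by exact_mod_cast hN
  have hl1 : ∑ n ∈ Icc 1 N, |divisorCount P n - reciprocalSum P| ≤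
      √(2 * reciprocalSum P) * N := by
    refine le_of_sq_le_sq ?_ (by positivity)
    calc (∑ n ∈ Icc 1 N, |divisorCount P n - reciprocalSum P|) ^ 2
        ≤ N * ∑ n ∈ Icc 1 N, (divisorCount P n - reciprocalSum P) ^ 2 := by
          simpa only [sq_abs, Nat.card_Icc, Nat.add_sub_cancel] using
            sq_sum_le_card_mul_sum_sq (s := Icc 1 N)
              (f := fun n => |divisorCount P n - reciprocalSum P|)
      _ ≤ N * (reciprocalSum P * (N + N)) := by
          gcongr
          exact (turan_kubilius hP N).trans (by gcongr)
      _ = (√(2 * reciprocalSum P) * N) ^ 2 := by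
          rw [mul_pow, Real.sq_sqrt (by positivity)]
          ring
  calc ‖∑ n ∈ Icc 1 N, ((divisorCount P n : ℂ) - reciprocalSum P) * b n‖
      ≤ ∑ n ∈ Icc 1 N, C * |divisorCount P n - reciprocalSum P| := by
        refine norm_sum_le_of_le _ fun n _ => ?_
        rw [norm_mul, mul_comm, ← Complex.ofReal_natCast, ← Complex.ofReal_sub, Complex.norm_real,
          Real.norm_eq_abs]
        gcongr
        exact hb n
    _ ≤ C * (√(2 * reciprocalSum P) * N) := by
        rw [← mul_sum]
        have hC : 0 ≤ C := (norm_nonneg _).trans (hb 0)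
        gcongr

lemma sum_norm_sq_sum_mul_le {𝕜 ι κ : Type*} [RCLike 𝕜] (s : Finset ι) (t : Finset κ)
    {c : ι → 𝕜} {B : ℝ} (hc : ∀ i, ‖c i‖ ≤ B) (A : ι → κ → 𝕜) :
    ∑ j ∈ t, ‖∑ i ∈ s, A i j * c i‖ ^ 2 ≤
      B ^ 2 * ∑ i ∈ s, ∑ i' ∈ s, ‖∑ j ∈ t, A i j * conj (A i' j)‖ := by
  have hexpand : ((∑ j ∈ t, ‖∑ i ∈ s, A i j * c i‖ ^ 2 : ℝ) : 𝕜) =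
      ∑ i ∈ s, ∑ i' ∈ s, c i * conj (c i') * ∑ j ∈ t, A i j * conj (A i' j) := by
    simp_rw [RCLike.ofReal_sum, RCLike.ofReal_pow, ← RCLike.mul_conj, map_sum, map_mul,
      sum_mul_sum, mul_sum]
    rw [sum_comm]
    refine sum_congr rfl fun i _ => ?_
    rw [sum_comm]
    exact sum_congr rfl fun i' _ => sum_congr rfl fun j _ => by ring
  calc ∑ j ∈ t, ‖∑ i ∈ s, A i j * c i‖ ^ 2
      = ‖((∑ j ∈ t, ‖∑ i ∈ s, A i j * c i‖ ^ 2 : ℝ) : 𝕜)‖ := by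
        rw [RCLike.norm_ofReal, abs_of_nonneg (by positivity)]
    _ ≤ ∑ i ∈ s, ∑ i' ∈ s, B ^ 2 * ‖∑ j ∈ t, A i j * conj (A i' j)‖ := by
        rw [hexpand]
        refine norm_sum_le_of_le _ fun i _ => norm_sum_le_of_le _ fun i' _ => ?_
        have hB : 0 ≤ B := (norm_nonneg _).trans (hc i)
        rw [norm_mul, norm_mul, RCLike.norm_conj, sq]
        gcongr
        exacts [hc i, hc i']
    _ = B ^ 2 * ∑ i ∈ s, ∑ i' ∈ s, ‖∑ j ∈ t, A i j * conj (A i' j)‖ := by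
        simp_rw [← mul_sum]

lemma norm_sq_sum_mul_mul_le {𝕜 ι κ : Type*} [RCLike 𝕜] (s : Finset ι) (t : Finset κ)
    {c : ι → 𝕜} {d : κ → 𝕜} {B C : ℝ} (hc : ∀ i, ‖c i‖ ≤ B) (hd : ∀ j, ‖d j‖ ≤ C)
    (A : ι → κ → 𝕜) :
    ‖∑ i ∈ s, ∑ j ∈ t, A i j * (c i * d j)‖ ^ 2 ≤
      (B * C) ^ 2 * (#t * ∑ i ∈ s, ∑ i' ∈ s, ‖∑ j ∈ t, A i j * conj (A i' j)‖) := by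
  have hrow : ‖∑ i ∈ s, ∑ j ∈ t, A i j * (c i * d j)‖ ≤
      C * ∑ j ∈ t, ‖∑ i ∈ s, A i j * c i‖ := by
    rw [sum_comm, mul_sum]
    refine norm_sum_le_of_le _ fun j _ => ?_
    simp_rw [← mul_assoc, ← sum_mul]
    rw [norm_mul, mul_comm]
    exact mul_le_mul_of_nonneg_right (hd j) (norm_nonneg _)
  calc ‖∑ i ∈ s, ∑ j ∈ t, A i j * (c i * d j)‖ ^ 2
      ≤ (C * ∑ j ∈ t, ‖∑ i ∈ s, A i j * c i‖) ^ 2 := by gcongr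
    _ ≤ C ^ 2 * (#t * ∑ j ∈ t, ‖∑ i ∈ s, A i j * c i‖ ^ 2) := by
        rw [mul_pow]
        gcongr
        exact sq_sum_le_card_mul_sum_sq
    _ ≤ C ^ 2 * (#t * (B ^ 2 * ∑ i ∈ s, ∑ i' ∈ s, ‖∑ j ∈ t, A i j * conj (A i' j)‖)) := by
        gcongr
        exact sum_norm_sq_sum_mul_le s t hc A
    _ = _ := by ring

lemma Icc_filter_mul_le {p : ℕ} (hp : 0 < p) (N : ℕ) :
    {m ∈ Icc 1 N | p * m ≤ N} = Icc 1 (N / p) := by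
  ext m
  rw [mem_filter, mem_Icc, mem_Icc, Nat.le_div_iff_mul_le hp, mul_comm m p]
  exact ⟨fun h => ⟨h.1.1, h.2⟩, fun h => ⟨⟨h.1, (Nat.le_mul_of_pos_left m hp).trans h.2⟩, h.2⟩⟩

lemma norm_sq_sum_bilinear_le {P : Finset ℕ} (hP : ∀ p ∈ P, 0 < p) (N : ℕ) {a u : ℕ → ℂ}
    (ha : ∀ n, ‖a n‖ ≤ 1) {C : ℝ} (hu : ∀ n, ‖u n‖ ≤ C) {K : ℝ} (hK : 0 ≤ K)
    (hcorr : ∀ p ∈ P, ∀ q ∈ P, p ≠ q →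
      ‖∑ m ∈ Icc 1 (N / max p q), a (p * m) * conj (a (q * m))‖ ≤ K) :
    ‖∑ p ∈ P, ∑ m ∈ Icc 1 (N / p), a (p * m) * (u p * u m)‖ ^ 2 ≤
      (C * C) ^ 2 * (N * (N * reciprocalSum P + #P ^ 2 * K)) := by
  set A : ℕ → ℕ → ℂ := fun p m => if p * m ≤ N then a (p * m) else 0 with hA
  have hsum : ∀ p ∈ P, ∑ m ∈ Icc 1 (N / p), a (p * m) * (u p * u m) =
      ∑ m ∈ Icc 1 N, A p m * (u p * u m) := fun p hp => by
    simp_rw [hA, ite_zero_mul, ← sum_filter, Icc_filter_mul_le (hP p hp)]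
  have hgram : ∀ p ∈ P, ∀ q ∈ P, ∑ m ∈ Icc 1 N, A p m * conj (A q m) =
      ∑ m ∈ Icc 1 (N / max p q), a (p * m) * conj (a (q * m)) := fun p hp q _ => by
    rw [← Icc_filter_mul_le (lt_max_of_lt_left (hP p hp)), sum_filter]
    refine sum_congr rfl fun m _ => ?_
    simp only [hA, ← Nat.mul_max_mul_right, max_le_iff, apply_ite conj, map_zero,
      ite_zero_mul_ite_zero]
  have hentry : ∀ p ∈ P, ∀ q ∈ P, ‖∑ m ∈ Icc 1 N, A p m * conj (A q m)‖ ≤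
      (if p = q then N * (p : ℝ)⁻¹ else 0) + K := fun p hp q hq => by
    rw [hgram p hp q hq]
    split_ifs with hpq
    · subst hpq
      refine le_add_of_le_of_nonneg ?_ hK
      calc ‖∑ m ∈ Icc 1 (N / max p p), a (p * m) * conj (a (p * m))‖
          ≤ ∑ m ∈ Icc 1 (N / p), 1 * 1 := by
            rw [max_self]
            refine norm_sum_le_of_le _ fun m _ => ?_
            rw [norm_mul, RCLike.norm_conj]
            gcongr <;> exact ha _
        _ ≤ N * (p : ℝ)⁻¹ := by
            simpa [div_eq_mul_inv] using Nat.cast_div_le (α := ℝ) (m := N) (n := p)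
    · rw [zero_add]
      exact hcorr p hp q hq hpq
  rw [sum_congr rfl hsum]
  refine (norm_sq_sum_mul_mul_le P (Icc 1 N) hu hu A).trans ?_
  rw [Nat.card_Icc, Nat.add_sub_cancel]
  gcongr
  refine (sum_le_sum fun p hp => sum_le_sum fun q hq => hentry p hp q hq).trans_eq ?_
  simp only [sum_add_distrib, sum_ite_eq, sum_const, nsmul_eq_mul, reciprocalSum, mul_sum]
  rw [sum_congr rfl fun p hp => if_pos hp]
  ring

lemma norm_sum_sub_mul_le {p : ℕ} {a u : ℕ → ℂ} (hu_mult : ∀ m, ¬ p ∣ m → u (p * m) = u p * u m)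
    (ha : ∀ n, ‖a n‖ ≤ 1) {C : ℝ} (hu : ∀ n, ‖u n‖ ≤ C) (N : ℕ) :
    ‖∑ m ∈ Icc 1 (N / p), a (p * m) * (u (p * m) - u p * u m)‖ ≤
      (C + C * C) * (((p : ℝ) ^ 2)⁻¹ * N) := by
  have hC : 0 ≤ C := (norm_nonneg _).trans (hu 0)
  rw [← sum_filter_of_ne (p := (p ∣ ·)) fun m _ hne => by
    contrapose! hne
    rw [hu_mult m hne, sub_self, mul_zero], sum_Icc_filter_dvd]
  calc ‖∑ m ∈ Icc 1 (N / p / p), a (p * (p * m)) * (u (p * (p * m)) - u p * u (p * m))‖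
      ≤ ∑ m ∈ Icc 1 (N / p / p), 1 * (C + C * C) := by
        refine norm_sum_le_of_le _ fun m _ => ?_
        rw [norm_mul]
        gcongr
        · exact ha _
        · refine norm_sub_le_of_le (hu _) ?_
          rw [norm_mul]
          gcongr <;> exact hu _
    _ = (C + C * C) * (N / p ^ 2 : ℕ) := by
        rw [sum_const, Nat.card_Icc, Nat.add_sub_cancel, Nat.div_div_eq_div_mul, ← sq, one_mul,
          nsmul_eq_mul, mul_comm]
    _ ≤ (C + C * C) * (((p : ℝ) ^ 2)⁻¹ * N) := by
        gcongr
        rw [inv_mul_eq_div]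
        exact_mod_cast Nat.cast_div_le (α := ℝ)

lemma reciprocalSum_mul_norm_sum_le {P : Finset ℕ} (hP : ∀ p ∈ P, p.Prime)
    (hL : 1 ≤ reciprocalSum P) {N : ℕ} (hN : 2 * #P ≤ N) {a u : ℕ → ℂ}
    (ha : ∀ n, ‖a n‖ ≤ 1) {C : ℝ} (hu : ∀ n, ‖u n‖ ≤ C)
    (hu_mult : ∀ p m, p.Prime → ¬ p ∣ m → u (p * m) = u p * u m)
    (hcorr : ∀ p ∈ P, ∀ q ∈ P, p ≠ q →
      ‖∑ m ∈ Icc 1 (N / max p q), a (p * m) * conj (a (q * m))‖ ≤ ((#P : ℝ) ^ 2)⁻¹ * N) :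
    reciprocalSum P * ‖∑ n ∈ Icc 1 N, a n * u n‖ ≤
      (C + C * C) * (√(2 * reciprocalSum P) + ∑' n : ℕ, ((n : ℝ) ^ 2)⁻¹) * N := by
  set L := reciprocalSum P
  have hC : 0 ≤ C := (norm_nonneg _).trans (hu 0)
  have hturan : ‖∑ n ∈ Icc 1 N, ((divisorCount P n : ℂ) - L) * (a n * u n)‖ ≤
      C * (√(2 * L) * N) :=
    norm_sum_divisorCount_sub_mul_le hP hN fun n => by
      rw [norm_mul]
      exact (mul_le_of_le_one_left (norm_nonneg _) (ha n)).trans (hu n)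
  have hbilinear : ‖∑ p ∈ P, ∑ m ∈ Icc 1 (N / p), a (p * m) * (u p * u m)‖ ≤
      C * C * (√(2 * L) * N) := by
    refine le_of_sq_le_sq ?_ (by positivity)
    refine (norm_sq_sum_bilinear_le (fun p hp => (hP p hp).pos) N ha hu (by positivity)
      hcorr).trans ?_
    have hcard : (#P : ℝ) ^ 2 * (((#P : ℝ) ^ 2)⁻¹ * N) ≤ L * N := by
      rw [← mul_assoc]
      gcongr
      exact mul_inv_le_one.trans hL
    rw [mul_pow (C * C), mul_pow √_, Real.sq_sqrt (by positivity)]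
    refine mul_le_mul_of_nonneg_left ?_ (by positivity)
    nlinarith [mul_le_mul_of_nonneg_left hcard N.cast_nonneg]
  have herror : ‖∑ p ∈ P, ∑ m ∈ Icc 1 (N / p), a (p * m) * (u (p * m) - u p * u m)‖ ≤
      (C + C * C) * ((∑' n : ℕ, ((n : ℝ) ^ 2)⁻¹) * N) := by
    refine (norm_sum_le_of_le _ fun p hp =>
      norm_sum_sub_mul_le (hu_mult p · (hP p hp)) ha hu N).trans ?_
    rw [← mul_sum, ← sum_mul]
    gcongr
    exact (Real.summable_nat_pow_inv.2 one_lt_two).sum_le_tsum P fun _ _ => by positivity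
  have hsplit : (L : ℂ) * ∑ n ∈ Icc 1 N, a n * u n =
      ∑ p ∈ P, ∑ m ∈ Icc 1 (N / p), a (p * m) * (u p * u m) +
        ∑ p ∈ P, ∑ m ∈ Icc 1 (N / p), a (p * m) * (u (p * m) - u p * u m) -
        ∑ n ∈ Icc 1 N, ((divisorCount P n : ℂ) - L) * (a n * u n) := by
    simp only [sub_mul, sum_sub_distrib, sum_divisorCount_mul, mul_sub, ← mul_sum]
    ring
  calc L * ‖∑ n ∈ Icc 1 N, a n * u n‖ = ‖(L : ℂ) * ∑ n ∈ Icc 1 N, a n * u n‖ := by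
        rw [norm_mul, Complex.norm_real, Real.norm_of_nonneg (by positivity)]
    _ ≤ C * C * (√(2 * L) * N) + (C + C * C) * ((∑' n : ℕ, ((n : ℝ) ^ 2)⁻¹) * N) +
          C * (√(2 * L) * N) := by
        rw [hsplit]
        exact norm_sub_le_of_le (norm_add_le_of_le hbilinear herror) hturan
    _ = _ := by ring

lemma exists_primes_mul_sqrt_reciprocalSum_le (D Z : ℝ) {η : ℝ} (hη : 0 < η) :
    ∃ P : Finset ℕ, (∀ p ∈ P, p.Prime) ∧ 1 ≤ reciprocalSum P ∧
      D * (√(2 * reciprocalSum P) + Z) ≤ η * reciprocalSum P := by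
  have hsqrt : (fun x : ℝ => √x) =o[atTop] fun x : ℝ => x :=
    ((Asymptotics.isBigO_refl _ _).mul_isLittleO (Asymptotics.isLittleO_const_left.2 (.inr
      (tendsto_norm_atTop_atTop.comp Real.tendsto_sqrt_atTop)))).congr'
        (.of_forall fun x => mul_one √x) ((eventually_ge_atTop 0).mono fun x => Real.mul_self_sqrt)
  have hlittle : (fun x : ℝ => D * (√(2 * x) + Z)) =o[atTop] fun x : ℝ => x := by
    simp_rw [Real.sqrt_mul zero_le_two]
    exact ((hsqrt.const_mul_left √2).add
      (Asymptotics.isLittleO_const_id_atTop Z)).const_mul_left D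
  obtain ⟨x₀, hx₀⟩ := eventually_atTop.1 ((hlittle.bound hη).and (eventually_ge_atTop 1))
  obtain ⟨P, hP, hle⟩ := exists_primes_le_reciprocalSum x₀
  obtain ⟨hbound, hone⟩ := hx₀ _ hle
  refine ⟨P, hP, hone, (le_abs_self _).trans ?_⟩
  rwa [Real.norm_eq_abs, Real.norm_of_nonneg (reciprocalSum_nonneg P)] at hbound

theorem exists_katai_bound {u : ℕ → ℂ} {C : ℝ} (hu : ∀ n, ‖u n‖ ≤ C)
    (hu_mult : ∀ p m, p.Prime → ¬ p ∣ m → u (p * m) = u p * u m) {η : ℝ} (hη : 0 < η) :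
    ∃ ε > 0, ∀ a : ℕ → ℂ, (∀ n, ‖a n‖ ≤ 1) →
      (∀ p q, p.Prime → q.Prime → p ≠ q →
        ∀ᶠ N : ℕ in atTop, ‖∑ n ∈ Icc 1 N, a (p * n) * conj (a (q * n))‖ ≤ ε * N) →
      ∀ᶠ N : ℕ in atTop, ‖∑ n ∈ Icc 1 N, a n * u n‖ ≤ η * N := by
  obtain ⟨P, hP, hL, hPη⟩ := exists_primes_mul_sqrt_reciprocalSum_le (C + C * C)
    (∑' n : ℕ, ((n : ℝ) ^ 2)⁻¹) hη
  have hcard : 0 < #P := card_pos.2 <| nonempty_iff_ne_empty.2 fun h => by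
    norm_num [h, reciprocalSum] at hL
  refine ⟨((#P : ℝ) ^ 2)⁻¹, by positivity, fun a ha hcorr => ?_⟩
  have hcorr' : ∀ᶠ N : ℕ in atTop, ∀ p ∈ P, ∀ q ∈ P, p ≠ q →
      ‖∑ m ∈ Icc 1 (N / max p q), a (p * m) * conj (a (q * m))‖ ≤ ((#P : ℝ) ^ 2)⁻¹ * N := by
    refine (eventually_all_finset P).2 fun p hp => (eventually_all_finset P).2 fun q hq => ?_
    refine eventually_imp_distrib_left.2 fun hpq => ?_
    have hdiv := Nat.tendsto_div_const_atTop (lt_max_of_lt_left (c := q) (hP p hp).pos).ne'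
    filter_upwards [hdiv.eventually (hcorr p q (hP p hp) (hP q hq) hpq)] with N hN
    exact hN.trans (by gcongr; exact Nat.div_le_self _ _)
  filter_upwards [hcorr', eventually_ge_atTop (2 * #P)] with N hN hcardN
  have hmain := reciprocalSum_mul_norm_sum_le hP hL hcardN ha hu hu_mult hN
  refine le_of_mul_le_mul_left (hmain.trans ?_) (one_pos.trans_le hL)
  calc (C + C * C) * (√(2 * reciprocalSum P) + ∑' n : ℕ, ((n : ℝ) ^ 2)⁻¹) * N
      ≤ η * reciprocalSum P * N := by gcongr
    _ = reciprocalSum P * (η * N) := by ring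

end Katai

section WeightedAverages

variable {Y : Type*} [MetricSpace Y] [CompactSpace Y] [MeasurableSpace Y] [BorelSpace Y]
  {S : Y → Y} {ν : Measure Y} {u : ℕ → ℂ} {C : ℝ}

/-- The weighted average `(1/N) ∑_{n ≤ N} (h (Sⁿ y) - ∫ h dν) u n` as a linear functional of the
continuous function `h`; subtracting the mean makes it vanish on constants. -/
noncomputable def centredAverage (S : Y → Y) (ν : Measure Y) [IsFiniteMeasure ν] (u : ℕ → ℂ) (y : Y)
    (N : ℕ) : C(Y, ℂ) →ₗ[ℂ] ℂ where
  toFun h := (N : ℂ)⁻¹ * ∑ n ∈ Finset.Icc 1 N, (h (S^[n] y) - ∫ x, h x ∂ν) * u n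
  map_add' g h := by
    have hint := fun h : C(Y, ℂ) => h.continuous.integrable_of_hasCompactSupport (μ := ν)
      (.of_compactSpace h)
    simp only [ContinuousMap.add_apply]
    rw [integral_add (hint g) (hint h)]
    simp only [add_sub_add_comm, add_mul, Finset.sum_add_distrib, mul_add]
  map_smul' c h := by
    simp only [ContinuousMap.smul_apply, smul_eq_mul, RingHom.id_apply, integral_const_mul,
      ← mul_sub, mul_assoc, ← Finset.mul_sum]
    ring

lemma norm_centredAverage_le_birkhoffAverage [IsFiniteMeasure ν] (hu : ∀ n, ‖u n‖ ≤ C) (y : Y)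
    (N : ℕ) (h : C(Y, ℂ)) :
    ‖centredAverage S ν u y N h‖ ≤
      C * birkhoffAverage ℝ S (fun x => ‖h x - ∫ x, h x ∂ν‖) N (S y) := by
  rw [birkhoffAverage_apply_map, smul_eq_mul, mul_left_comm, Finset.mul_sum]
  change ‖(N : ℂ)⁻¹ * _‖ ≤ _
  rw [norm_mul, norm_inv, Complex.norm_natCast]
  gcongr
  refine norm_sum_le_of_le _ fun n _ => ?_
  rw [norm_mul, mul_comm]
  exact mul_le_mul_of_nonneg_right (hu n) (norm_nonneg _)

lemma norm_centredAverage_le_add [IsFiniteMeasure ν] (hu : ∀ n, ‖u n‖ ≤ C) {y : Y} {N : ℕ}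
    (hN : N ≠ 0) {h : C(Y, ℂ)} {η : ℝ}
    (hη : ‖∑ n ∈ Finset.Icc 1 N, h (S^[n] y) * u n‖ ≤ η * N) :
    ‖centredAverage S ν u y N h‖ ≤ η + C * ‖∫ x, h x ∂ν‖ := by
  have hmean : ‖∑ n ∈ Finset.Icc 1 N, (∫ x, h x ∂ν) * u n‖ ≤ C * ‖∫ x, h x ∂ν‖ * N := by
    refine (norm_sum_le_of_le (f := fun n => (∫ x, h x ∂ν) * u n)
      (n := fun _ => C * ‖∫ x, h x ∂ν‖) _ fun n _ => ?_).trans_eq ?_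
    · rw [norm_mul, mul_comm]
      exact mul_le_mul_of_nonneg_right (hu n) (norm_nonneg _)
    · rw [Finset.sum_const, Nat.card_Icc, Nat.add_sub_cancel, nsmul_eq_mul, mul_comm]
  change ‖(N : ℂ)⁻¹ * _‖ ≤ _
  rw [norm_mul, norm_inv, Complex.norm_natCast, inv_mul_le_iff₀ (by positivity)]
  simp only [sub_mul, Finset.sum_sub_distrib]
  linarith [norm_sub_le_of_le hη hmean]

variable [IsProbabilityMeasure ν]

lemma integral_norm_sub_le_norm_sub_toLp (g : Lp ℂ 2 ν) (h : C(Y, ℂ)) :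
    ∫ x, ‖g x - h x‖ ∂ν ≤ ‖g - ContinuousMap.toLp 2 ν ℂ h‖ := by
  refine (integral_congr_ae ?_).trans_le (integral_norm_le_norm_Lp one_le_two _)
  filter_upwards [Lp.coeFn_sub g (ContinuousMap.toLp 2 ν ℂ h),
    ContinuousMap.coeFn_toLp (p := 2) (𝕜 := ℂ) ν h] with x hx hx'
  rw [hx, Pi.sub_apply, hx']

lemma integral_norm_sub_integral_le (h : C(Y, ℂ)) :
    ∫ x, ‖h x - ∫ x, h x ∂ν‖ ∂ν ≤ 2 * ‖ContinuousMap.toLp 2 ν ℂ h‖ := by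
  have hint := h.continuous.integrable_of_hasCompactSupport (μ := ν) (.of_compactSpace h)
  have hL2 : ∫ x, ‖h x‖ ∂ν ≤ ‖ContinuousMap.toLp 2 ν ℂ h‖ := by
    refine (integral_congr_ae ?_).trans_le (integral_norm_le_norm_Lp one_le_two _)
    filter_upwards [ContinuousMap.coeFn_toLp (p := 2) (𝕜 := ℂ) ν h] with x hx
    rw [hx]
  calc ∫ x, ‖h x - ∫ x, h x ∂ν‖ ∂ν ≤ ∫ x, (‖h x‖ + ‖∫ x, h x ∂ν‖) ∂ν :=
        integral_mono (hint.sub (integrable_const _)).norm (hint.norm.add (integrable_const _))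
          fun x => norm_sub_le _ _
    _ = ∫ x, ‖h x‖ ∂ν + ‖∫ x, h x ∂ν‖ := by
        rw [integral_add hint.norm (integrable_const _), integral_const, probReal_univ, one_smul]
    _ ≤ 2 * ‖ContinuousMap.toLp 2 ν ℂ h‖ := by
        linarith [norm_integral_le_integral_norm (μ := ν) h]

lemma eventually_norm_centredAverage_le (huniq : UniquelyErgodicWith S ν) (hS : Continuous S)
    (hu : ∀ n, ‖u n‖ ≤ C) (y : Y) {h : C(Y, ℂ)} {ε : ℝ}
    (hε : C * 2 * ‖ContinuousMap.toLp 2 ν ℂ h‖ < ε) :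
    ∀ᶠ N in atTop, ‖centredAverage S ν u y N h‖ ≤ ε := by
  have hC : 0 ≤ C := (norm_nonneg (u 0)).trans (hu 0)
  let G : C(Y, ℝ) := ⟨fun x => ‖h x - ∫ x, h x ∂ν‖, by fun_prop⟩
  have hlim := (huniq.tendsto_birkhoffAverage hS G (S y)).const_mul C
  have hlt : C * ∫ x, G x ∂ν < ε :=
    (mul_le_mul_of_nonneg_left (integral_norm_sub_integral_le h) hC).trans_lt
      (mul_assoc C 2 _ ▸ hε)
  exact (hlim.eventually_lt_const hlt).mono fun N hN =>
    (norm_centredAverage_le_birkhoffAverage hu y N h).trans hN.le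

end WeightedAverages

section Orthogonality

variable {Y : Type*} [MetricSpace Y] [CompactSpace Y] [MeasurableSpace Y] [BorelSpace Y]
  {S : Y → Y} {ν : Measure Y} [IsProbabilityMeasure ν] {u : ℕ → ℂ} {C : ℝ} {g : Lp ℂ 2 ν}

lemma mem_asymptoticKernel_of_ae_eq_const {b : ℂ} (hg : g =ᵐ[ν] fun _ => b) (y : Y) :
    g ∈ asymptoticKernel (ContinuousMap.toLp 2 ν ℂ).toLinearMap (centredAverage S ν u y) atTop := by
  intro δ hδ
  have hgb : g = ContinuousMap.toLp 2 ν ℂ (.const Y b) := by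
    refine Lp.ext ?_
    filter_upwards [hg, ContinuousMap.coeFn_toLp (p := 2) (𝕜 := ℂ) ν (.const Y b)] with x hx hx'
    rw [hx, hx', ContinuousMap.const_apply]
  refine ⟨.const Y b, by simp [hgb, hδ.le], .of_forall fun N => ?_⟩
  simpa [centredAverage] using hδ.le

lemma IsQuasiEigenfunction.mem_asymptoticKernel {k : ℕ} {c : Circle} {F : Y → ℂ}
    (hF : IsQuasiEigenfunction S ν (k + 1) c F) (hc : ¬ IsOfFinOrder c) (hg : g =ᵐ[ν] F)
    (huniq : UniquelyErgodicWith S ν) (htot : TotallyErgodic S ν) (hS : Continuous S)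
    (hu : ∀ n, ‖u n‖ ≤ C) (hu_mult : ∀ p m, p.Prime → ¬ p ∣ m → u (p * m) = u p * u m) (y : Y) :
    g ∈ asymptoticKernel (ContinuousMap.toLp 2 ν ℂ).toLinearMap (centredAverage S ν u y) atTop := by
  intro δ hδ
  have hC : 0 ≤ C := (norm_nonneg (u 0)).trans (hu 0)
  obtain ⟨ε, hε, hkatai⟩ := exists_katai_bound hu hu_mult (half_pos hδ)
  obtain ⟨γ, hγ, hCγ⟩ := exists_pos_mul_lt (half_pos hδ) C
  have hgnorm : ∀ᵐ x ∂ν, ‖g x‖ ≤ 1 := by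
    filter_upwards [hg, hF.norm_eq_one] with x hx hx'
    rw [hx, hx']
  obtain ⟨h, hh, hdist⟩ := exists_continuousMap_norm_le_one_norm_sub_toLp_le (𝕜 := ℂ) (by simp) g
    hgnorm (lt_min hδ (lt_min hγ (by positivity : 0 < ε / 4)))
  have hL1 : ∫ x, ‖F x - h x‖ ∂ν ≤ min δ (min γ (ε / 4)) :=
    (integral_congr_ae (hg.mono fun x hx => by simp only [hx])).symm.trans_le
      ((integral_norm_sub_le_norm_sub_toLp g h).trans hdist)
  have hmean : ‖∫ x, h x ∂ν‖ ≤ γ := by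
    have hint := h.continuous.integrable_of_hasCompactSupport (μ := ν) (.of_compactSpace h)
    have hzero := hF.integral_eq_zero ⟨hS.measurable, huniq.2.1⟩ hc
    rw [← norm_neg, ← zero_sub, ← hzero,
      ← integral_sub ((hF.memLp 1).integrable le_rfl) hint]
    exact (norm_integral_le_integral_norm _).trans
      (hL1.trans ((min_le_right _ _).trans (min_le_left _ _)))
  have hcorr : 2 * ∫ x, ‖F x - h x‖ ∂ν < ε := by
    linarith [hL1.trans ((min_le_right _ _).trans (min_le_right _ _))]
  refine ⟨h, hdist.trans (min_le_left _ _), ?_⟩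
  filter_upwards [eventually_ne_atTop 0, hkatai (fun n => h (S^[n] y))
    (fun n => (h.norm_coe_le_norm _).trans hh) fun p q hp hq =>
      hF.eventually_norm_sum_mul_conj_le hc huniq htot hS hh hcorr y hp.ne_zero hq.ne_zero]
    with N hN hsum
  linarith [norm_centredAverage_le_add (ν := ν) hu hN hsum, mul_le_mul_of_nonneg_left hmean hC]

lemma mem_asymptoticKernel_of_mem_quasiEigenfunctions {k : ℕ} {F : Y → ℂ}
    (hF : F ∈ quasiEigenfunctions S ν k) (hg : g =ᵐ[ν] F)
    (huniq : UniquelyErgodicWith S ν) (htot : TotallyErgodic S ν) (hS : Continuous S)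
    (hu : ∀ n, ‖u n‖ ≤ C) (hu_mult : ∀ p m, p.Prime → ¬ p ∣ m → u (p * m) = u p * u m) (y : Y) :
    g ∈ asymptoticKernel (ContinuousMap.toLp 2 ν ℂ).toLinearMap (centredAverage S ν u y) atTop := by
  obtain ⟨c, hc⟩ := IsQuasiEigenfunction.of_mem_quasiEigenfunctions hF
  obtain ⟨b, hb⟩ | ⟨j, b, hb, hfin⟩ := hc.exists_ae_eq_const_or_not_isOfFinOrder htot
  · exact mem_asymptoticKernel_of_ae_eq_const (hg.trans hb) y
  · exact hb.mem_asymptoticKernel hfin hg huniq htot hS hu hu_mult y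

end Orthogonality

theorem sarnak_quasiDiscreteSpectrum_general {Y : Type*} [MetricSpace Y] [CompactSpace Y]
    [MeasurableSpace Y] [BorelSpace Y] {S : Y → Y} (hS : Continuous S) {ν : Measure Y}
    [IsProbabilityMeasure ν] (huniq : UniquelyErgodicWith S ν) (htot : TotallyErgodic S ν)
    {u : ℕ → ℂ} {C : ℝ} (hu_mult : ∀ p m, p.Prime → ¬ p ∣ m → u (p * m) = u p * u m)
    (hu : ∀ n, ‖u n‖ ≤ C) {f : C(Y, ℂ)}
    (hf : ContinuousMap.toLp 2 ν ℂ f ∈ closure (Submodule.span ℂ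
      {g : Lp ℂ 2 ν | ∃ k : ℕ, ∃ F ∈ quasiEigenfunctions S ν k, ⇑g =ᵐ[ν] F} : Set (Lp ℂ 2 ν)))
    (y : Y) :
    Tendsto (fun N : ℕ => (N : ℂ)⁻¹ *
      ∑ n ∈ Finset.Icc 1 N, (f (S^[n] y) - ∫ x, f x ∂ν) * u n) atTop (𝓝 0) := by
  have hC : 0 ≤ C := (norm_nonneg (u 0)).trans (hu 0)
  have hspan : Submodule.span ℂ
      {g : Lp ℂ 2 ν | ∃ k : ℕ, ∃ F ∈ quasiEigenfunctions S ν k, ⇑g =ᵐ[ν] F} ≤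
      asymptoticKernel (ContinuousMap.toLp 2 ν ℂ).toLinearMap (centredAverage S ν u y) atTop :=
    Submodule.span_le.2 fun g ⟨_, _, hF, hg⟩ =>
      mem_asymptoticKernel_of_mem_quasiEigenfunctions hF hg huniq htot hS hu hu_mult y
  exact tendsto_zero_of_mem_asymptoticKernel (mul_nonneg hC zero_le_two)
    (fun h ε hε => eventually_norm_centredAverage_le huniq hS hu y hε)
    (closure_minimal hspan isClosed_asymptoticKernel hf)

/-- **Theorem 1.1.** If `S` is a uniquely ergodic continuous map of a compact metric space `Y`
whose unique invariant measure `ν` makes `(Y,ν,S)` a system with quasi-discrete spectrum, then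
for every multiplicative `u : ℕ → ℂ` with `|u| ≤ 1`, every continuous `f` with `∫ f dν = 0`
and every `y ∈ Y`, `(1/N) ∑_{n ≤ N} f(Sⁿ y) u(n) → 0`. -/
theorem sarnak_quasiDiscreteSpectrum
    {Y : Type*} [MetricSpace Y] [CompactSpace Y] [MeasurableSpace Y] [BorelSpace Y]
    (S : Y → Y) (hScont : Continuous S) (ν : Measure Y)
    (huniq : UniquelyErgodicWith S ν)
    (hqds : QuasiDiscreteSpectrum S ν)
    (u : ℕ → ℂ) (hu_mult : ∀ m n : ℕ, Nat.Coprime m n → u (m * n) = u m * u n)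
    (hu_bd : ∀ n, ‖u n‖ ≤ 1)
    (f : Y → ℂ) (hf : Continuous f) (hf_int : (∫ y, f y ∂ν) = 0) (y : Y) :
    Tendsto (fun N : ℕ => (N : ℂ)⁻¹ * ∑ n ∈ Finset.Icc 1 N, f (S^[n] y) * u n)
      atTop (nhds 0) := by
  have hν := huniq.1
  simpa [hf_int] using sarnak_quasiDiscreteSpectrum_general hScont huniq hqds.1
    (fun p m hp hpm => hu_mult p m ((Nat.Prime.coprime_iff_not_dvd hp).2 hpm)) hu_bd
    (f := ⟨f, hf⟩) (hqds.2 _) y
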